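/- Let X ⊆ ℝ^d, let p be an unnormalized probability density function on X with normalization constant Z = ∫ p(x) dx satisfying 0 < Z ≤ 1, and let P be the probability distribution on X with density p/Z. Fix i ∈ {1,…,d}, and assume the marginal function F_i(t) = ∫ 1[x_i ≤ t]·p(x) dx is continuous in t. Let α : X → [0,1] be measurable and define g(t) = ∫ α(x)·1[x_i ≤ t]·p(x) dx. Let x⁽¹⁾,…,x⁽ⁿ⁾ be i.i.d. samples from P and define the empirical estimate ĝ(t) = (Z/n)·Σ_{k=1}^n α(x⁽ᵏ⁾)·1[x_i⁽ᵏ⁾ ≤ t]. Then for any n ≥ 3, the probability (over the samples) that sup_{t ∈ ℝ} |g(t) − ĝ(t)| ≥ 4·(log n)/√n is at most 2/n^{3/2}. -/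

import Mathlib

open MeasureTheory

/-!
A set `{Y ≤ t}` whose probability lies in `[j / n, (j + 1) / n]` is squeezed between two sets that
depend only on `j` and whose probabilities differ by at most `1 / n`. Multiplying the indicators by
`α` does not widen these brackets, so `n + 1` brackets cover the whole family `α · 1[Y ≤ t]`.
If every upper bracket function overshoots its mean by less than `δ` and every lower one undershoots
by less than `δ`, all errors `|ĝ - g| / Z` are below `δ + 1 / n`. Hoeffding's inequality for the
`2 (n + 1)` bracket functions with `δ = 3 log n / √n` gives the claim. Atoms of `Y` do no harm if
the lower bracket is built from `ν (Iio ·)` and the upper one from `ν (Iic ·)`, where `ν` is the law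
of `Y`: take `{s | ν (Iio s) < j / n}` and `{s | ν (Iic s) ≤ (j + 1) / n}`.
-/

section QuantileBrackets

open Set

section LowerSets

variable {S : Type*} [LinearOrder S] [MeasurableSpace S] (ν : Measure S) [IsFiniteMeasure ν]

theorem isLowerSet_setOf_measureReal_Iic_le (c : ℝ) : IsLowerSet {s | ν.real (Iic s) ≤ c} :=
  fun _ _ hts hs => (measureReal_mono (Iic_subset_Iic.2 hts)).trans hs

theorem isLowerSet_setOf_measureReal_Iio_lt (c : ℝ) : IsLowerSet {s | ν.real (Iio s) < c} :=
  fun _ _ hts hs => (measureReal_mono (Iio_subset_Iio hts)).trans_lt hs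

variable {ν}

theorem setOf_measureReal_Iio_lt_subset_Iic {c : ℝ} {t : S} (ht : c ≤ ν.real (Iic t)) :
    {s | ν.real (Iio s) < c} ⊆ Iic t := fun _ hs =>
  not_lt.1 fun hts => hs.not_ge <| ht.trans <| measureReal_mono <| Iic_subset_Iio.2 hts

theorem Iic_subset_setOf_measureReal_Iic_le {c : ℝ} {t : S} (ht : ν.real (Iic t) ≤ c) :
    Iic t ⊆ {s | ν.real (Iic s) ≤ c} := fun _ hs =>
  (measureReal_mono <| Iic_subset_Iic.2 hs).trans ht

end LowerSets

variable {S : Type*} [LinearOrder S] [TopologicalSpace S] [OrderTopology S]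
  [SecondCountableTopology S] [MeasurableSpace S]

theorem measure_setOf_measure_Iic_le (ν : Measure S) (c : ENNReal) :
    ν {s | ν (Iic s) ≤ c} ≤ c := by
  set A : Set S := {s | ν (Iic s) ≤ c}
  have hA : IsLowerSet A := fun s t hts hs => (measure_mono (Iic_subset_Iic.2 hts)).trans hs
  have hA_eq : A = ⋃ s : A, Iic (s : S) := by
    ext t
    simp only [mem_iUnion, mem_Iic]
    exact ⟨fun ht => ⟨⟨t, ht⟩, le_rfl⟩, fun ⟨s, hts⟩ => hA hts s.2⟩
  have : OrdConnected A := hA.ordConnected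
  have hmono : Monotone fun s : A => Iic (s : S) := fun s t hst => Iic_subset_Iic.2 hst
  calc ν A = ⨆ s : A, ν (Iic (s : S)) := by rw [← hmono.measure_iUnion, ← hA_eq]
    _ ≤ c := iSup_le fun s => s.2

theorem measure_setOf_measure_Ici_le (ν : Measure S) (c : ENNReal) :
    ν {s | ν (Ici s) ≤ c} ≤ c :=
  measure_setOf_measure_Iic_le (S := Sᵒᵈ) ν c

theorem measureReal_setOf_measureReal_Iic_le (ν : Measure S) [IsFiniteMeasure ν] {c : ℝ}
    (hc : 0 ≤ c) : ν.real {s | ν.real (Iic s) ≤ c} ≤ c := by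
  simp only [measureReal_def, ← ENNReal.le_ofReal_iff_toReal_le (measure_ne_top _ _) hc]
  exact measure_setOf_measure_Iic_le ν _

theorem measureReal_setOf_measureReal_Ici_le (ν : Measure S) [IsFiniteMeasure ν] {c : ℝ}
    (hc : 0 ≤ c) : ν.real {s | ν.real (Ici s) ≤ c} ≤ c := by
  simp only [measureReal_def, ← ENNReal.le_ofReal_iff_toReal_le (measure_ne_top _ _) hc]
  exact measure_setOf_measure_Ici_le ν _

theorem le_measureReal_setOf_measureReal_Iio_lt [BorelSpace S] (ν : Measure S)
    [IsProbabilityMeasure ν] {c : ℝ} (hc : c ≤ 1) : c ≤ ν.real {s | ν.real (Iio s) < c} := by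
  have hcompl : {s | ν.real (Iio s) < c}ᶜ = {s | ν.real (Ici s) ≤ 1 - c} := by
    ext s
    rw [mem_compl_iff, mem_ofPred_eq, mem_ofPred_eq, ← compl_Iio,
      probReal_compl_eq_one_sub measurableSet_Iio, sub_le_sub_iff_left, not_lt]
  have hupper := measureReal_setOf_measureReal_Ici_le ν (sub_nonneg.2 hc)
  rw [← hcompl, probReal_compl_eq_one_sub
    (isLowerSet_setOf_measureReal_Iio_lt ν c).ordConnected.measurableSet] at hupper
  linarith

theorem measureReal_setOf_Iic_le_sdiff_setOf_Iio_lt_le [BorelSpace S] (ν : Measure S)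
    [IsProbabilityMeasure ν] {a b : ℝ} (ha : a ≤ 1) (hb : 0 ≤ b) (hab : a ≤ b) :
    ν.real ({s | ν.real (Iic s) ≤ b} \ {s | ν.real (Iio s) < a}) ≤ b - a := by
  have hL := isLowerSet_setOf_measureReal_Iio_lt ν a
  obtain hLU | hUL := hL.total (isLowerSet_setOf_measureReal_Iic_le ν b)
  · rw [measureReal_sdiff hLU hL.ordConnected.measurableSet]
    exact sub_le_sub (measureReal_setOf_measureReal_Iic_le ν hb)
      (le_measureReal_setOf_measureReal_Iio_lt ν ha)
  · -- Occurs when an atom carries the distribution function from below `a` to above `b`.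
    simpa [sdiff_eq_empty.2 hUL] using hab

end QuantileBrackets

theorem indicator_mem_Icc_zero_one {E : Type*} {α : E → ℝ} (hα : ∀ x, α x ∈ Set.Icc (0 : ℝ) 1)
    (A : Set E) (x : E) : A.indicator α x ∈ Set.Icc (0 : ℝ) 1 :=
  ⟨Set.indicator_nonneg (fun x _ => (hα x).1) x,
    (Set.indicator_le_self' (fun x _ => (hα x).1) x).trans (hα x).2⟩

section EmpiricalError

open ProbabilityTheory Set

variable {E : Type*} [MeasurableSpace E] {P : Measure E} {n : ℕ}

/-- The error of the empirical mean of `f` over the sample `ω` as an estimate of the mean of `f`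
under `P`. For `n = 0` the empirical mean is `0`. -/
noncomputable def empiricalError (P : Measure E) (f : E → ℝ) (ω : Fin n → E) : ℝ :=
  (∑ k, f (ω k)) / n - ∫ x, f x ∂P

theorem empiricalError_neg (f : E → ℝ) (ω : Fin n → E) :
    empiricalError P (-f) ω = -empiricalError P f ω := by
  simp only [empiricalError, Pi.neg_apply, Finset.sum_neg_distrib, integral_neg]
  ring

theorem measureReal_pi_le_empiricalError_le [IsProbabilityMeasure P] {f : E → ℝ}
    (hf : Measurable f) {a b : ℝ} (hf_mem : ∀ x, f x ∈ Icc a b) {δ : ℝ} (hδ : 0 ≤ δ) :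
    (Measure.pi fun _ : Fin n => P).real {ω | δ ≤ empiricalError P f ω}
      ≤ Real.exp (-(2 * n * δ ^ 2 / (b - a) ^ 2)) := by
  obtain rfl | hn := n.eq_zero_or_pos
  · simp
  have hn : (0 : ℝ) < n := by exact_mod_cast hn
  have hindep : iIndepFun (fun (k : Fin n) (ω : Fin n → E) => f (ω k) - ∫ x, f x ∂P)
      (Measure.pi fun _ : Fin n => P) :=
    iIndepFun_pi (X := fun _ x => f x - ∫ x, f x ∂P) fun _ => (hf.sub_const _).aemeasurable
  have hsubG : ∀ k ∈ (Finset.univ : Finset (Fin n)),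
      HasSubgaussianMGF (fun ω : Fin n → E => f (ω k) - ∫ x, f x ∂P)
        ((‖b - a‖₊ / 2) ^ 2) (Measure.pi fun _ : Fin n => P) := fun k _ => by
    have hmean := integral_comp_eval (μ := fun _ : Fin n => P) (i := k) hf.aestronglyMeasurable
    rw [← hmean]
    exact hasSubgaussianMGF_of_mem_Icc (hf.comp (measurable_pi_apply k)).aemeasurable
      (.of_forall fun ω => hf_mem (ω k))
  have hsum : {ω : Fin n → E | δ ≤ empiricalError P f ω}
      = {ω | n * δ ≤ ∑ k, (f (ω k) - ∫ x, f x ∂P)} := by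
    ext ω
    simp only [empiricalError, mem_ofPred_eq, le_sub_iff_add_le, le_div_iff₀ hn,
      Finset.sum_sub_distrib, Finset.sum_const, Finset.card_univ, Fintype.card_fin, nsmul_eq_mul]
    ring_nf
  rw [hsum]
  refine (HasSubgaussianMGF.measure_sum_ge_le_of_iIndepFun hindep hsubG (by positivity)).trans_eq ?_
  congr 1
  simp only [Finset.sum_const, Finset.card_univ, Fintype.card_fin, nsmul_eq_mul, NNReal.coe_mul,
    NNReal.coe_natCast, NNReal.coe_pow, NNReal.coe_div, coe_nnnorm, NNReal.coe_ofNat, div_pow,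
    Real.norm_eq_abs, sq_abs]
  field_simp

/-- A family of brackets `[l j, u j]` of `[0, 1]`-valued measurable functions of
`L¹(P)`-width at most `ε`, such that every member of the class `f` lies in one of the brackets. -/
structure IsBracketCover {T J : Type*} (P : Measure E) (ε : ℝ) (f : T → E → ℝ)
    (l u : J → E → ℝ) : Prop where
  measurable_lower : ∀ j, Measurable (l j)
  measurable_upper : ∀ j, Measurable (u j)
  lower_mem_Icc : ∀ j x, l j x ∈ Icc (0 : ℝ) 1
  upper_mem_Icc : ∀ j x, u j x ∈ Icc (0 : ℝ) 1
  integral_upper_le : ∀ j, ∫ x, u j x ∂P ≤ ∫ x, l j x ∂P + ε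
  exists_bracket : ∀ t, ∃ j, l j ≤ f t ∧ f t ≤ u j

theorem abs_empiricalError_lt_of_bracket {f l u : E → ℝ} {δ ε : ℝ} {ω : Fin n → E}
    (hf : Integrable f P) (hl : Integrable l P) (hu : Integrable u P) (hlf : l ≤ f) (hfu : f ≤ u)
    (hε : ∫ x, u x ∂P ≤ ∫ x, l x ∂P + ε) (hlower : -δ < empiricalError P l ω)
    (hupper : empiricalError P u ω < δ) : |empiricalError P f ω| < ε + δ := by
  have hmean_l : ∫ x, l x ∂P ≤ ∫ x, f x ∂P := integral_mono hl hf hlf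
  have hmean_u : ∫ x, f x ∂P ≤ ∫ x, u x ∂P := integral_mono hf hu hfu
  have hsum_l : (∑ k, l (ω k)) / n ≤ (∑ k, f (ω k)) / n := by gcongr with k; exact hlf (ω k)
  have hsum_u : (∑ k, f (ω k)) / n ≤ (∑ k, u (ω k)) / n := by gcongr with k; exact hfu (ω k)
  unfold empiricalError at *
  rw [abs_lt]
  constructor <;> linarith

namespace IsBracketCover

variable {T J : Type*} [Fintype J] {ε : ℝ} {f : T → E → ℝ} {l u : J → E → ℝ}

theorem measureReal_pi_exists_bracket_error_le [IsProbabilityMeasure P]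
    (h : IsBracketCover P ε f l u) {δ : ℝ} (hδ : 0 ≤ δ) :
    (Measure.pi fun _ : Fin n => P).real
        (⋃ j, {ω | δ ≤ empiricalError P (u j) ω} ∪ {ω | δ ≤ empiricalError P (-l j) ω})
      ≤ 2 * Fintype.card J * Real.exp (-(2 * n * δ ^ 2)) := by
  have hupper (j : J) := measureReal_pi_le_empiricalError_le (P := P) (n := n)
    (h.measurable_upper j) (h.upper_mem_Icc j) hδ
  have hlower (j : J) := measureReal_pi_le_empiricalError_le (P := P) (n := n)
    (h.measurable_lower j).neg (a := -1) (b := 0)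
    (fun x => by simpa [and_comm] using h.lower_mem_Icc j x) hδ
  calc _ ≤ ∑ j : J, (Real.exp (-(2 * n * δ ^ 2)) + Real.exp (-(2 * n * δ ^ 2))) := by
        refine (measureReal_iUnion_fintype_le _).trans (Finset.sum_le_sum fun j _ => ?_)
        refine (measureReal_union_le _ _).trans (add_le_add ?_ ?_)
        · simpa using hupper j
        · simpa using hlower j
    _ = 2 * Fintype.card J * Real.exp (-(2 * n * δ ^ 2)) := by
        rw [Finset.sum_const, Finset.card_univ, nsmul_eq_mul]
        ring

theorem measureReal_pi_le_iSup_abs_empiricalError_le [IsProbabilityMeasure P] [Nonempty T]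
    (h : IsBracketCover P ε f l u) (hf : ∀ t, Integrable (f t) P) {δ r : ℝ} (hδ : 0 ≤ δ)
    (hr : ε + δ < r) :
    (Measure.pi fun _ : Fin n => P).real {ω | r ≤ ⨆ t, |empiricalError P (f t) ω|}
      ≤ 2 * Fintype.card J * Real.exp (-(2 * n * δ ^ 2)) := by
  refine (measureReal_mono fun ω hω => ?_).trans (h.measureReal_pi_exists_bracket_error_le hδ)
  by_contra hsmall
  simp only [mem_iUnion, mem_union, mem_ofPred_eq, not_exists, not_or, not_le,
    empiricalError_neg, neg_lt (b := δ)] at hsmall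
  refine hr.not_ge (hω.trans (ciSup_le fun t => ?_))
  obtain ⟨j, hlf, hfu⟩ := h.exists_bracket t
  have hl : Integrable (l j) P := .of_mem_Icc 0 1 (h.measurable_lower j).aemeasurable
    (.of_forall (h.lower_mem_Icc j))
  have hu : Integrable (u j) P := .of_mem_Icc 0 1 (h.measurable_upper j).aemeasurable
    (.of_forall (h.upper_mem_Icc j))
  exact (abs_empiricalError_lt_of_bracket (hf t) hl hu hlf hfu (h.integral_upper_le j)
    (hsmall j).2 (hsmall j).1).le

end IsBracketCover

theorem integral_indicator_sub_le_measureReal_sdiff [IsFiniteMeasure P] {α : E → ℝ}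
    (hα : Measurable α) (hα_mem : ∀ x, α x ∈ Icc (0 : ℝ) 1) {A B : Set E} (hA : MeasurableSet A)
    (hB : MeasurableSet B) :
    ∫ x, B.indicator α x ∂P - ∫ x, A.indicator α x ∂P ≤ P.real (B \ A) := by
  have hα_int : Integrable α P := .of_mem_Icc 0 1 hα.aemeasurable (.of_forall hα_mem)
  have hinter : ∫ x in B ∩ A, α x ∂P ≤ ∫ x in A, α x ∂P :=
    setIntegral_mono_set hα_int.integrableOn (.of_forall fun x => (hα_mem x).1)
      (.of_forall inter_subset_right)
  have hdiff : ∫ x in B \ A, α x ∂P ≤ P.real (B \ A) := by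
    simpa using setIntegral_mono hα_int.integrableOn (integrable_const (1 : ℝ)).integrableOn
      fun x => (hα_mem x).2
  rw [integral_indicator hB, integral_indicator hA,
    ← integral_inter_add_sdiff hA hα_int.integrableOn]
  linarith

end EmpiricalError

theorem exists_fin_div_le_and_le_add_one_div {m : ℕ} (hm : 0 < m) {x : ℝ}
    (hx : x ∈ Set.Icc (0 : ℝ) 1) : ∃ j : Fin (m + 1), (j : ℝ) / m ≤ x ∧ x ≤ (j + 1) / m := by
  have hm' : (0 : ℝ) < m := by exact_mod_cast hm
  have hfloor : ⌊x * m⌋₊ < m + 1 :=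
    Nat.lt_succ_of_le (Nat.floor_le_of_le (mul_le_of_le_one_left hm'.le hx.2))
  refine ⟨⟨⌊x * m⌋₊, hfloor⟩, ?_, ?_⟩
  · exact (div_le_iff₀ hm').2 (Nat.floor_le (mul_nonneg hx.1 hm'.le))
  · exact (le_div_iff₀ hm').2 (Nat.lt_floor_add_one _).le

section SampleSize

variable {n : ℕ}

theorem one_le_log_natCast (hn : 3 ≤ n) : 1 ≤ Real.log n := by
  have hn : (3 : ℝ) ≤ n := by exact_mod_cast hn
  rw [Real.le_log_iff_exp_le (by positivity)]
  linarith [Real.exp_one_lt_d9]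

theorem one_div_add_three_mul_log_div_sqrt_lt (hn : 3 ≤ n) :
    1 / n + 3 * Real.log n / √n < 4 * Real.log n / √n := by
  have hlog := one_le_log_natCast hn
  have hn : (3 : ℝ) ≤ n := by exact_mod_cast hn
  have hsqrt : √n < n := (Real.sqrt_lt' (by linarith)).2 (by nlinarith)
  calc 1 / n + 3 * Real.log n / √n < 1 / √n + 3 * Real.log n / √n := by gcongr
    _ ≤ Real.log n / √n + 3 * Real.log n / √n := by gcongr
    _ = 4 * Real.log n / √n := by ring

theorem two_mul_succ_mul_exp_le_two_div_rpow (hn : 3 ≤ n) :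
    2 * (n + 1) * Real.exp (-(2 * n * (3 * Real.log n / √n) ^ 2))
      ≤ 2 / (n : ℝ) ^ ((3 : ℝ) / 2) := by
  have hlog := one_le_log_natCast hn
  have hn : (3 : ℝ) ≤ n := by exact_mod_cast hn
  have hn_pos : (0 : ℝ) < n := by linarith
  have hexponent : 2 * n * (3 * Real.log n / √n) ^ 2 = 18 * Real.log n ^ 2 := by
    rw [div_pow, Real.sq_sqrt hn_pos.le]
    field_simp
    ring
  have hsucc : (n : ℝ) + 1 ≤ Real.exp (2 * Real.log n) := by
    rw [two_mul, Real.exp_add, Real.exp_log hn_pos]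
    nlinarith
  calc 2 * (n + 1) * Real.exp (-(2 * n * (3 * Real.log n / √n) ^ 2))
      ≤ 2 * Real.exp (2 * Real.log n) * Real.exp (-(18 * Real.log n ^ 2)) := by
        rw [hexponent]
        gcongr
    _ = 2 * Real.exp (2 * Real.log n - 18 * Real.log n ^ 2) := by
        rw [mul_assoc, ← Real.exp_add, sub_eq_add_neg]
    _ ≤ 2 * Real.exp (-(Real.log n * (3 / 2))) := by
        gcongr
        nlinarith
    _ = 2 / (n : ℝ) ^ ((3 : ℝ) / 2) := by
        rw [Real.exp_neg, ← Real.rpow_def_of_pos hn_pos, ← div_eq_mul_inv]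

end SampleSize

section WeightedHalfLines

open Set

variable {E S : Type*} [MeasurableSpace E] [LinearOrder S] [TopologicalSpace S] [OrderTopology S]
  [SecondCountableTopology S] [MeasurableSpace S] [BorelSpace S]
  (P : Measure E) [IsProbabilityMeasure P] {Y : E → S} {α : E → ℝ}

theorem exists_isBracketCover_indicator_preimage_Iic (hY : Measurable Y) (hα : Measurable α)
    (hα_mem : ∀ x, α x ∈ Icc (0 : ℝ) 1) {m : ℕ} (hm : 0 < m) :
    ∃ l u : Fin (m + 1) → E → ℝ,
      IsBracketCover P (1 / m) (fun t => (Y ⁻¹' Iic t).indicator α) l u := by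
  set ν : Measure S := P.map Y
  have : IsProbabilityMeasure ν := Measure.isProbabilityMeasure_map hY.aemeasurable
  set L : Fin (m + 1) → Set S := fun j => {s | ν.real (Iio s) < j / m}
  set U : Fin (m + 1) → Set S := fun j => {s | ν.real (Iic s) ≤ (j + 1) / m}
  have hL (j) : MeasurableSet (L j) :=
    (isLowerSet_setOf_measureReal_Iio_lt ν _).ordConnected.measurableSet
  have hU (j) : MeasurableSet (U j) :=
    (isLowerSet_setOf_measureReal_Iic_le ν _).ordConnected.measurableSet
  have hwidth (j) : P.real (Y ⁻¹' U j \ Y ⁻¹' L j) ≤ 1 / m := by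
    have hj : (j : ℝ) / m ≤ 1 :=
      div_le_one_of_le₀ (by exact_mod_cast Nat.le_of_lt_succ j.2) m.cast_nonneg
    calc P.real (Y ⁻¹' U j \ Y ⁻¹' L j) = ν.real (U j \ L j) :=
          (map_measureReal_apply hY ((hU j).diff (hL j))).symm
      _ ≤ (j + 1) / m - j / m :=
          measureReal_setOf_Iic_le_sdiff_setOf_Iio_lt_le ν hj (by positivity) (by gcongr; simp)
      _ = 1 / m := by ring
  refine ⟨fun j => (Y ⁻¹' L j).indicator α, fun j => (Y ⁻¹' U j).indicator α,
    fun j => hα.indicator (hY (hL j)), fun j => hα.indicator (hY (hU j)),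
    fun j => indicator_mem_Icc_zero_one hα_mem _, fun j => indicator_mem_Icc_zero_one hα_mem _,
    fun j => sub_le_iff_le_add'.1 <| (integral_indicator_sub_le_measureReal_sdiff hα hα_mem
      (hY (hL j)) (hY (hU j))).trans (hwidth j), fun t => ?_⟩
  obtain ⟨j, hj, hj'⟩ := exists_fin_div_le_and_le_add_one_div hm
    (x := ν.real (Iic t)) ⟨measureReal_nonneg, measureReal_le_one⟩
  have hα_nonneg (x) : 0 ≤ α x := (hα_mem x).1
  exact ⟨j,
    indicator_le_indicator_of_subset
      (preimage_mono (setOf_measureReal_Iio_lt_subset_Iic hj)) hα_nonneg,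
    indicator_le_indicator_of_subset
      (preimage_mono (Iic_subset_setOf_measureReal_Iic_le hj')) hα_nonneg⟩

theorem measure_pi_le_iSup_abs_empiricalError_indicator_preimage_Iic_le (hY : Measurable Y)
    (hα : Measurable α) (hα_mem : ∀ x, α x ∈ Icc (0 : ℝ) 1) {n : ℕ} (hn : 3 ≤ n) :
    (Measure.pi fun _ : Fin n => P)
        {ω | 4 * Real.log n / √n ≤ ⨆ t, |empiricalError P ((Y ⁻¹' Iic t).indicator α) ω|}
      ≤ ENNReal.ofReal (2 / (n : ℝ) ^ ((3 : ℝ) / 2)) := by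
  have : Nonempty S := P.nonempty_of_neZero.map Y
  obtain ⟨l, u, hcover⟩ :=
    exists_isBracketCover_indicator_preimage_Iic P hY hα hα_mem (m := n) (by omega)
  have hint (t : S) : Integrable ((Y ⁻¹' Iic t).indicator α) P :=
    (Integrable.of_mem_Icc 0 1 hα.aemeasurable (.of_forall hα_mem)).indicator
      (hY measurableSet_Iic)
  rw [← ofReal_measureReal]
  refine ENNReal.ofReal_le_ofReal <| (hcover.measureReal_pi_le_iSup_abs_empiricalError_le hint
    (by positivity) (one_div_add_three_mul_log_div_sqrt_lt hn)).trans ?_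
  simpa using two_mul_succ_mul_exp_le_two_div_rpow hn

end WeightedHalfLines

section NormalizedDensity

variable {E : Type*} [MeasurableSpace E] {μ : Measure E} {X : Set E} {p : E → ℝ} {Z : ℝ}

theorem isProbabilityMeasure_withDensity_indicator_div (hX : MeasurableSet X)
    (hp_nonneg : ∀ x ∈ X, 0 ≤ p x) (hZ : Z = ∫ x in X, p x ∂μ) (hZ_pos : 0 < Z) :
    IsProbabilityMeasure (μ.withDensity fun x => ENNReal.ofReal (X.indicator p x / Z)) := by
  have hp_int : Integrable (X.indicator p) μ :=
    (integrable_indicator_iff hX).2 (.of_integral_ne_zero (hZ ▸ hZ_pos.ne'))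
  constructor
  rw [withDensity_apply _ .univ, Measure.restrict_univ,
    ← ofReal_integral_eq_lintegral_ofReal (hp_int.div_const Z)
      (.of_forall fun x => div_nonneg (Set.indicator_nonneg hp_nonneg x) hZ_pos.le),
    integral_div, integral_indicator hX, ← hZ, div_self hZ_pos.ne', ENNReal.ofReal_one]

theorem setIntegral_mul_eq_mul_integral_withDensity (hX : MeasurableSet X) (hp : Measurable p)
    (hp_nonneg : ∀ x ∈ X, 0 ≤ p x) (hZ_pos : 0 < Z) (h : E → ℝ) :
    ∫ x in X, h x * p x ∂μ
      = Z * ∫ x, h x ∂μ.withDensity fun x => ENNReal.ofReal (X.indicator p x / Z) := by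
  rw [integral_withDensity_eq_integral_toReal_smul
    ((hp.indicator hX).div_const Z).ennreal_ofReal (.of_forall fun _ => ENNReal.ofReal_lt_top),
    ← integral_const_mul, ← integral_indicator hX]
  refine integral_congr_ae (.of_forall fun x => ?_)
  by_cases hx : x ∈ X
  · have := hp_nonneg x hx
    simp only [Set.indicator_of_mem hx, smul_eq_mul]
    rw [ENNReal.toReal_ofReal (by positivity)]
    field_simp
  · simp [Set.indicator_of_notMem hx]

end NormalizedDensity

theorem stmt_2_general {E S : Type*} [MeasurableSpace E] [LinearOrder S] [TopologicalSpace S]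
    [OrderTopology S] [SecondCountableTopology S] [MeasurableSpace S] [BorelSpace S]
    {μ : Measure E} {X : Set E} (hX : MeasurableSet X) {p : E → ℝ} (hp : Measurable p)
    (hp_nonneg : ∀ x ∈ X, 0 ≤ p x) {Z : ℝ} (hZ : Z = ∫ x in X, p x ∂μ) (hZ_pos : 0 < Z)
    {P : Measure E} (hP : P = μ.withDensity fun x => ENNReal.ofReal (X.indicator p x / Z))
    {Y : E → S} (hY : Measurable Y) {α : E → ℝ} (hα : Measurable α)
    (hα_mem : ∀ x, α x ∈ Set.Icc (0 : ℝ) 1) {n : ℕ} (hn : 3 ≤ n) :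
    (Measure.pi fun _ : Fin n => P)
        {ω | Z * (4 * Real.log n / √n) ≤
          ⨆ t, |(∫ x in X, α x * (if Y x ≤ t then (1 : ℝ) else 0) * p x ∂μ)
            - (Z / n) * ∑ k, α (ω k) * (if Y (ω k) ≤ t then (1 : ℝ) else 0)|}
      ≤ ENNReal.ofReal (2 / (n : ℝ) ^ ((3 : ℝ) / 2)) := by
  have : IsProbabilityMeasure P :=
    hP ▸ isProbabilityMeasure_withDensity_indicator_div hX hp_nonneg hZ hZ_pos
  have hweight (t : S) (x : E) :
      α x * (if Y x ≤ t then (1 : ℝ) else 0) = (Y ⁻¹' Set.Iic t).indicator α x := by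
    by_cases hx : Y x ≤ t <;> simp [hx]
  have herror (t : S) (ω : Fin n → E) :
      |(∫ x in X, α x * (if Y x ≤ t then (1 : ℝ) else 0) * p x ∂μ)
          - (Z / n) * ∑ k, α (ω k) * (if Y (ω k) ≤ t then (1 : ℝ) else 0)|
        = Z * |empiricalError P ((Y ⁻¹' Set.Iic t).indicator α) ω| := by
    rw [setIntegral_mul_eq_mul_integral_withDensity hX hp hp_nonneg hZ_pos, ← hP, abs_sub_comm,
      div_mul_eq_mul_div, mul_div_assoc, ← mul_sub, abs_mul, abs_of_pos hZ_pos]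
    simp only [hweight, empiricalError]
  simp only [herror, ← Real.mul_iSup_of_nonneg hZ_pos.le, mul_le_mul_iff_right₀ hZ_pos]
  exact measure_pi_le_iSup_abs_empiricalError_indicator_preimage_Iic_le P hY hα hα_mem hn

/-- bound on the estimation error. With `n ≥ 3` i.i.d. samples from the
distribution `P` with density `p/Z`, the empirical estimate `ĝ` of
`g(t) = ∫ α(x)·1[xᵢ ≤ t]·p(x) dx` satisfies
`sup_t |g(t) − ĝ(t)| ≥ 4 log n / √n` with probability at most `2 / n^{3/2}`. -/
theorem stmt_2 (d : ℕ) (X : Set (Fin d → ℝ)) (hX : MeasurableSet X)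
    (p : (Fin d → ℝ) → ℝ) (hp_meas : Measurable p)
    (hp_nn : ∀ x ∈ X, 0 ≤ p x) (hp_int : IntegrableOn p X)
    (Z : ℝ) (hZ : Z = ∫ x in X, p x) (hZ_pos : 0 < Z) (hZ_le : Z ≤ 1)
    (P : Measure (Fin d → ℝ))
    (hP : P = volume.withDensity fun x => ENNReal.ofReal (X.indicator p x / Z))
    [IsProbabilityMeasure P]
    (i : Fin d)
    (hF_cont : Continuous fun t => ∫ x in X, (if x i ≤ t then (1:ℝ) else 0) * p x)
    (α : (Fin d → ℝ) → ℝ) (hα_meas : Measurable α)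
    (hα_range : ∀ x, α x ∈ Set.Icc (0:ℝ) 1)
    (g : ℝ → ℝ)
    (hg : ∀ t, g t = ∫ x in X, α x * (if x i ≤ t then (1:ℝ) else 0) * p x)
    (n : ℕ) (hn : 3 ≤ n)
    (ghat : (Fin n → (Fin d → ℝ)) → ℝ → ℝ)
    (hghat : ∀ ω t, ghat ω t
      = (Z / n) * ∑ k : Fin n, α (ω k) * (if ω k i ≤ t then (1:ℝ) else 0)) :
    (Measure.pi fun _ : Fin n => P)
        {ω | 4 * Real.log n / Real.sqrt n ≤ ⨆ t : ℝ, |g t - ghat ω t|}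
      ≤ ENNReal.ofReal (2 / (n : ℝ) ^ ((3:ℝ)/2)) := by
  simp only [hg, hghat]
  exact (measure_mono fun ω => (mul_le_of_le_one_left (by positivity) hZ_le).trans).trans
    (stmt_2_general hX hp_meas hp_nn hZ hZ_pos hP (measurable_pi_apply i) hα_meas hα_range hn)
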